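/- Let ρ > 0, σ > 0, h(ξ) = ∫_ξ^∞ erfc(η) dη, and define φ_a(ξ) = (ρσ/2)·(√h(ξ/σ) − √h(−ξ/σ))². Then lim_{ξ→0} φ_a(ξ)/ξ² = ρ√π/(2σ). Equivalently, the annealed variance of the rescaled tracer position is σ/(ρ√π). -/

import Mathlib

open MeasureTheory Real Filter Topology

/-- The complementary error function `erfc(x) = (2/√π) ∫_x^∞ e^{−u²} du`. -/
noncomputable def erfc (x : ℝ) : ℝ := (2 / Real.sqrt π) * ∫ u in Set.Ioi x, Real.exp (-u ^ 2)

/-- `h(ξ) = ∫_ξ^∞ erfc(η) dη`. -/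
noncomputable def hfun (ξ : ℝ) : ℝ := ∫ η in Set.Ioi ξ, erfc η

/-- The annealed large deviation function
`φ_a(ξ) = (ρσ/2)(√h(ξ/σ) − √h(−ξ/σ))²`. -/
noncomputable def φa (ρ σ ξ : ℝ) : ℝ :=
  (ρ * σ / 2) * (Real.sqrt (hfun (ξ / σ)) - Real.sqrt (hfun (-ξ / σ))) ^ 2

/-!
Squaring a symmetric difference quotient of `√h` at `0` gives `(2 (√h)'(0))² = h'(0)² / h(0)`, and
the prefactor `ρσ/2` of `φ_a` becomes `ρ/(2σ)` in the variable `ξ/σ`. By the fundamental theorem of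
calculus `h'(0) = -erfc 0 = -1`, while Fubini turns the iterated tail integral `h(0)` into the first
moment `(2/√π) ∫_0^∞ u e^{-u²} du = 1/√π`, so the squared quotient tends to `√π`.
-/

section TailIntegral

variable {E : Type*} [NormedAddCommGroup E] [NormedSpace ℝ E] {f : ℝ → E} {a x : ℝ}

lemma hasDerivAt_integral_Ioi [CompleteSpace E] (hf : IntegrableOn f (Set.Ioi a)) (hx : a < x)
    (hfx : ContinuousAt f x) : HasDerivAt (fun y => ∫ u in Set.Ioi y, f u) (-f x) x := by
  have h_interval : IntervalIntegrable f volume a x :=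
    (intervalIntegrable_iff_integrableOn_Ioc_of_le hx.le).2 (hf.mono_set Set.Ioc_subset_Ioi_self)
  have h_meas : StronglyMeasurableAtFilter f (𝓝 x) :=
    ⟨Set.Ioi a, Ioi_mem_nhds hx, hf.aestronglyMeasurable⟩
  refine ((intervalIntegral.integral_hasDerivAt_right h_interval h_meas hfx).const_sub
    (∫ u in Set.Ioi a, f u)).congr_of_eventuallyEq ?_
  filter_upwards [Ioi_mem_nhds hx] with y hy
  rw [← intervalIntegral.integral_Ioi_sub_Ioi hf (Set.mem_Ioi.1 hy).le, sub_sub_cancel]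

lemma aestronglyMeasurable_of_sub_smul
    (hf : AEStronglyMeasurable (fun u => (u - a) • f u) (volume.restrict (Set.Ioi a))) :
    AEStronglyMeasurable f (volume.restrict (Set.Ioi a)) := by
  have h_inv : Measurable fun u : ℝ => (u - a)⁻¹ := by fun_prop
  refine (h_inv.aestronglyMeasurable.smul hf).congr ?_
  filter_upwards [ae_restrict_mem measurableSet_Ioi] with u hu
  exact inv_smul_smul₀ (sub_pos.2 hu).ne' (f u)

lemma setIntegral_Ioi_indicator_Iio_const [CompleteSpace E] {u : ℝ} (hu : a ≤ u) (c : E) :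
    ∫ η in Set.Ioi a, (Set.Iio u).indicator (fun _ => c) η = (u - a) • c := by
  rw [setIntegral_indicator measurableSet_Iio, Set.Ioi_inter_Iio, setIntegral_const,
    Real.volume_real_Ioo_of_le hu]

lemma integrable_prod_indicator_lt
    (hf : IntegrableOn (fun u => (u - a) • f u) (Set.Ioi a)) :
    Integrable (fun p : ℝ × ℝ => (Set.Iio p.2).indicator (fun _ => f p.2) p.1)
      ((volume.restrict (Set.Ioi a)).prod (volume.restrict (Set.Ioi a))) := by
  have h_meas : AEStronglyMeasurable
      (fun p : ℝ × ℝ => (Set.Iio p.2).indicator (fun _ => f p.2) p.1)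
      ((volume.restrict (Set.Ioi a)).prod (volume.restrict (Set.Ioi a))) :=
    (aestronglyMeasurable_of_sub_smul hf.aestronglyMeasurable).comp_snd.indicator
      (measurableSet_lt measurable_fst measurable_snd)
  refine (integrable_prod_iff' h_meas).2 ⟨.of_forall fun u => ?_, hf.norm.congr ?_⟩
  · have h_finite : volume.restrict (Set.Ioi a) (Set.Iio u) ≠ ⊤ := by
      rw [Measure.restrict_apply measurableSet_Iio, Set.inter_comm, Set.Ioi_inter_Iio]
      exact measure_Ioo_lt_top.ne
    exact (integrableOn_const (C := f u) h_finite).integrable_indicator measurableSet_Iio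
  · filter_upwards [ae_restrict_mem measurableSet_Ioi] with u hu
    simp only [norm_indicator_eq_indicator_norm]
    rw [setIntegral_Ioi_indicator_Iio_const (Set.mem_Ioi.1 hu).le, norm_smul,
      Real.norm_of_nonneg (sub_pos.2 hu).le, smul_eq_mul]

lemma setIntegral_Ioi_indicator_Iio {η : ℝ} (hη : a ≤ η) :
    ∫ u in Set.Ioi a, (Set.Iio u).indicator (fun _ => f u) η = ∫ u in Set.Ioi η, f u := by
  have h_swap : (fun u => (Set.Iio u).indicator (fun _ => f u) η) = (Set.Ioi η).indicator f := by
    ext u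
    simp only [Set.indicator_apply, Set.mem_Iio, Set.mem_Ioi]
  rw [h_swap, setIntegral_indicator measurableSet_Ioi,
    Set.inter_eq_self_of_subset_right (Set.Ioi_subset_Ioi hη)]

lemma integrableOn_Ioi_integral_Ioi
    (hf : IntegrableOn (fun u => (u - a) • f u) (Set.Ioi a)) :
    IntegrableOn (fun η => ∫ u in Set.Ioi η, f u) (Set.Ioi a) := by
  refine (integrable_prod_indicator_lt hf).integral_prod_left.congr ?_
  filter_upwards [ae_restrict_mem measurableSet_Ioi] with η hη
  exact setIntegral_Ioi_indicator_Iio (Set.mem_Ioi.1 hη).le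

lemma integral_Ioi_integral_Ioi [CompleteSpace E]
    (hf : IntegrableOn (fun u => (u - a) • f u) (Set.Ioi a)) :
    ∫ η in Set.Ioi a, ∫ u in Set.Ioi η, f u = ∫ u in Set.Ioi a, (u - a) • f u := calc
  ∫ η in Set.Ioi a, ∫ u in Set.Ioi η, f u
      = ∫ η in Set.Ioi a, ∫ u in Set.Ioi a, (Set.Iio u).indicator (fun _ => f u) η :=
    setIntegral_congr_fun measurableSet_Ioi fun _ hη =>
      (setIntegral_Ioi_indicator_Iio (Set.mem_Ioi.1 hη).le).symm
  _ = ∫ u in Set.Ioi a, ∫ η in Set.Ioi a, (Set.Iio u).indicator (fun _ => f u) η :=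
    integral_integral_swap (integrable_prod_indicator_lt hf)
  _ = ∫ u in Set.Ioi a, (u - a) • f u :=
    setIntegral_congr_fun measurableSet_Ioi fun _ hu =>
      setIntegral_Ioi_indicator_Iio_const (Set.mem_Ioi.1 hu).le _

end TailIntegral

section SymmetricSlope

lemma tendsto_symmetric_slope_zero {𝕜 F : Type*} [NontriviallyNormedField 𝕜]
    [NormedAddCommGroup F] [NormedSpace 𝕜 F] {f : 𝕜 → F} {f' : F} {x : 𝕜}
    (hf : HasDerivAt f f' x) :
    Tendsto (fun t => t⁻¹ • (f (x + t) - f (x - t))) (𝓝[≠] 0) (𝓝 ((2 : 𝕜) • f')) := by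
  have h_add : HasDerivAt (fun t => f (x + t)) f' 0 :=
    HasDerivAt.comp_const_add x 0 (by simpa using hf)
  have h_sub : HasDerivAt (fun t => f (x - t)) (-f') 0 :=
    HasDerivAt.comp_const_sub x 0 (by simpa using hf)
  simpa [two_smul] using (h_add.sub h_sub).tendsto_slope_zero

lemma tendsto_sq_symmetric_slope_sqrt {g : ℝ → ℝ} {g' x : ℝ} (hg : HasDerivAt g g' x)
    (hx : 0 < g x) :
    Tendsto (fun t => ((√(g (x + t)) - √(g (x - t))) / t) ^ 2) (𝓝[≠] 0) (𝓝 (g' ^ 2 / g x)) := by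
  have h_limit : ((2 : ℝ) • (g' / (2 * √(g x)))) ^ 2 = g' ^ 2 / g x := by
    rw [smul_eq_mul, ← mul_div_assoc, mul_div_mul_left _ _ two_ne_zero, div_pow, Real.sq_sqrt hx.le]
  rw [← h_limit]
  refine ((tendsto_symmetric_slope_zero (hg.sqrt hx.ne')).pow 2).congr fun t => ?_
  rw [smul_eq_mul, inv_mul_eq_div]

end SymmetricSlope

section Erfc

lemma integrable_exp_neg_sq : Integrable fun u : ℝ => exp (-u ^ 2) := by
  simpa using integrable_exp_neg_mul_sq one_pos

lemma integrable_mul_exp_neg_sq : Integrable fun u : ℝ => u * exp (-u ^ 2) := by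
  simpa using integrable_mul_exp_neg_mul_sq one_pos

lemma integral_Ioi_exp_neg_sq : ∫ u in Set.Ioi (0 : ℝ), exp (-u ^ 2) = √π / 2 := by
  simpa using integral_gaussian_Ioi 1

lemma integral_Ioi_mul_exp_neg_sq : ∫ u in Set.Ioi (0 : ℝ), u * exp (-u ^ 2) = 1 / 2 := by
  simpa using integral_rpow_mul_exp_neg_rpow (p := 2) (q := 1) two_pos (by norm_num)

lemma erfc_zero : erfc 0 = 1 := by
  rw [erfc, integral_Ioi_exp_neg_sq]
  field_simp

lemma continuous_erfc : Continuous erfc := by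
  refine continuous_const.mul (continuous_iff_continuousAt.2 fun x => ?_)
  exact (hasDerivAt_integral_Ioi integrable_exp_neg_sq.integrableOn (sub_one_lt x)
    (by fun_prop)).continuousAt

lemma integrableOn_Ioi_erfc (a : ℝ) : IntegrableOn erfc (Set.Ioi a) := by
  have h_moment : Integrable fun u : ℝ => (u - a) • exp (-u ^ 2) := by
    simp only [smul_eq_mul, sub_mul]
    exact integrable_mul_exp_neg_sq.sub (integrable_exp_neg_sq.const_mul a)
  exact (integrableOn_Ioi_integral_Ioi h_moment.integrableOn).const_mul (2 / √π)

lemma hasDerivAt_hfun (x : ℝ) : HasDerivAt hfun (-erfc x) x :=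
  hasDerivAt_integral_Ioi (integrableOn_Ioi_erfc (x - 1)) (sub_one_lt x)
    continuous_erfc.continuousAt

lemma hfun_zero : hfun 0 = 1 / √π := by
  have h_moment := integral_Ioi_integral_Ioi (a := 0) (f := fun u : ℝ => exp (-u ^ 2))
    (by simpa using integrable_mul_exp_neg_sq.integrableOn)
  simp only [sub_zero, smul_eq_mul, integral_Ioi_mul_exp_neg_sq] at h_moment
  simp only [hfun, erfc, integral_const_mul, h_moment]
  ring

end Erfc

lemma φa_div_sq_eq (ρ ξ : ℝ) {σ : ℝ} (hσ : σ ≠ 0) :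
    φa ρ σ ξ / ξ ^ 2 =
      ρ / (2 * σ) * ((√(hfun (ξ / σ)) - √(hfun (-(ξ / σ)))) / (ξ / σ)) ^ 2 := by
  rw [φa, neg_div, div_div_eq_mul_div, div_pow, mul_pow]
  field_simp

/-- `lim_{ξ→0} φ_a(ξ)/ξ² = ρ√π/(2σ)`: the quadratic behaviour of the annealed
large deviation function, encoding the annealed variance `σ/(ρ√π)`. -/
theorem annealed_ldf_quadratic (ρ σ : ℝ) (hρ : 0 < ρ) (hσ : 0 < σ) :
    Tendsto (fun ξ : ℝ => φa ρ σ ξ / ξ ^ 2) (𝓝[≠] 0)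
      (nhds (ρ * Real.sqrt π / (2 * σ))) := by
  have h_slope : Tendsto (fun t => ((√(hfun t) - √(hfun (-t))) / t) ^ 2) (𝓝[≠] 0) (𝓝 √π) := by
    simpa [erfc_zero, hfun_zero] using tendsto_sq_symmetric_slope_sqrt (hasDerivAt_hfun 0)
      (by rw [hfun_zero]; positivity)
  have h_scale : Tendsto (fun ξ : ℝ => ξ / σ) (𝓝[≠] 0) (𝓝[≠] 0) := by
    simpa using ((hasDerivAt_id (0 : ℝ)).div_const σ).tendsto_nhdsNE (by positivity)
  rw [mul_div_right_comm]
  exact ((h_slope.comp h_scale).const_mul (ρ / (2 * σ))).congr fun ξ =>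
    (φa_div_sq_eq ρ ξ hσ.ne').symm
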